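/- arXiv:2001.00607 — 5 statements merged into one kernel-verified Lean document; each statement's English description precedes it below -/
import Mathlib

section
/- Let K ≥ 1 and let F ∈ ℝ^{K×K} be invertible. Then for every m ∈ {1,…,K}, the successive minima of the lattice generated by F and of its dual lattice satisfy λ_m(F) · λ_{K−m+1}(F^{-T}) ≤ K. -/
open Matrix

/-- Euclidean norm of a vector in `ℝ^n`. -/
noncomputable def euclNorm {n : ℕ} (x : Fin n → ℝ) : ℝ := Real.sqrt (∑ i, x i ^ 2)

/-- The lattice generated by the matrix `F`: all integer combinations of its columns. -/
def latticeOf {K : ℕ} (F : Matrix (Fin K) (Fin K) ℝ) : Set (Fin K → ℝ) :=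
  {x | ∃ w : Fin K → ℤ, x = F.mulVec fun i => (w i : ℝ)}

/-- The `m`-th successive minimum of the lattice generated by `F`: the infimum of radii `r > 0`
such that the closed ball of radius `r` contains `m` linearly independent lattice points. -/
noncomputable def succMin {K : ℕ} (F : Matrix (Fin K) (Fin K) ℝ) (m : ℕ) : ℝ :=
  sInf {r : ℝ | 0 < r ∧ ∃ s : Finset (Fin K → ℝ),
    (↑s : Set (Fin K → ℝ)) ⊆ latticeOf F ∧ (∀ v ∈ s, euclNorm v ≤ r) ∧
    s.card = m ∧ LinearIndependent ℝ (fun v : s => (v : Fin K → ℝ))}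

namespace Bana

noncomputable def Q {n : ℕ} (A : Matrix (Fin n) (Fin n) ℝ) (x : Fin n → ℝ) : ℝ := x ⬝ᵥ A *ᵥ x

lemma summable_one (c : ℝ) (hc : 0 < c) (t : ℝ) :
    Summable (fun k : ℤ => Real.exp (-c * (k + t) ^ 2)) := by
  have h1 : Summable (fun k : ℤ => Real.exp (-(c/2) * (k:ℝ) ^ 2)) := by
    have h := (summable_int_iff_summable_nat_and_neg (f := fun k : ℤ => Real.exp (-(c/2) * (k:ℝ) ^ 2))).2
    apply h
    have h2 : Summable (fun k : ℕ => Real.exp (-(c/2) * (k:ℝ) ^ 2)) := by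
      have h3 : Summable (fun k : ℕ => Real.exp ((k:ℝ) * (-(c/2)))) :=
        Real.summable_exp_nat_mul_iff.2 (by linarith)
      refine h3.of_nonneg_of_le (fun _ => (Real.exp_pos _).le) (fun k => ?_)
      apply Real.exp_le_exp.2
      have : (k:ℝ) ≤ (k:ℝ)^2 := by
        exact_mod_cast Nat.le_self_pow (by norm_num) k
      nlinarith
    constructor
    · simpa using h2
    · simpa using h2
  refine (h1.mul_left (Real.exp (c * t^2))).of_nonneg_of_le (fun _ => (Real.exp_pos _).le) (fun k => ?_)
  rw [← Real.exp_add]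
  apply Real.exp_le_exp.2
  nlinarith [mul_nonneg hc.le (sq_nonneg ((k:ℝ) + 2 * t))]

lemma summable_diag (c : ℝ) (hc : 0 < c) : ∀ (n : ℕ) (z : Fin n → ℝ),
    Summable (fun w : Fin n → ℤ => Real.exp (-c * ∑ i, (w i + z i) ^ 2)) := by
  intro n
  induction n with
  | zero => intro z; exact Summable.of_finite
  | succ n ih =>
    intro z
    rw [← (Fin.consEquiv (fun _ => ℤ)).summable_iff]
    have := (summable_one c hc (z 0)).mul_of_nonneg (ih (fun i => z i.succ))
      (fun _ => (Real.exp_pos _).le) (fun _ => (Real.exp_pos _).le)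
    refine this.congr (fun p => ?_)
    rw [← Real.exp_add]
    simp [Fin.sum_univ_succ, Fin.consEquiv]
    ring

lemma posDef_bound {n : ℕ} (A : Matrix (Fin n) (Fin n) ℝ) (hA : A.PosDef) :
    ∃ c > 0, ∀ x : Fin n → ℝ, c * ∑ i, x i ^ 2 ≤ Q A x := by
  rcases Nat.eq_zero_or_pos n with rfl | hn
  · exact ⟨1, one_pos, fun x => by simp [Q]⟩
  have hQc : Continuous (Q A) := by
    unfold Q; fun_prop
  have : Nonempty (Fin n) := ⟨⟨0, hn⟩⟩
  obtain ⟨x0, hx0, hmin⟩ := (isCompact_sphere (0 : Fin n → ℝ) 1).exists_isMinOn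
    (NormedSpace.sphere_nonempty.2 zero_le_one) hQc.continuousOn
  have hx0' : x0 ≠ 0 := by
    rintro rfl
    simp at hx0
  have hpos : 0 < Q A x0 := by
    simpa [Q] using hA.dotProduct_mulVec_pos hx0'
  refine ⟨Q A x0 / n, by positivity, fun x => ?_⟩
  by_cases hx : x = 0
  · simp [hx, Q]
  have hnx : 0 < ‖x‖ := norm_pos_iff.2 hx
  have h1 : Q A x0 ≤ Q A (‖x‖⁻¹ • x) := hmin (by simp [norm_smul, hnx.ne'])
  have h2 : Q A (‖x‖⁻¹ • x) = ‖x‖⁻¹ ^ 2 * Q A x := by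
    simp [Q, mulVec_smul]; ring
  have h3 : ∑ i, x i ^ 2 ≤ n * ‖x‖ ^ 2 := by
    calc ∑ i, x i ^ 2 ≤ ∑ i : Fin n, ‖x‖ ^ 2 := by
          apply Finset.sum_le_sum
          intro i _
          rw [← sq_abs]
          have := norm_le_pi_norm x i
          rw [Real.norm_eq_abs] at this
          gcongr
      _ = _ := by simp
  rw [h2] at h1
  have h4 : Q A x0 * ‖x‖^2 ≤ Q A x := by
    have := mul_le_mul_of_nonneg_right h1 (sq_nonneg ‖x‖)
    field_simp at this
    linarith
  calc Q A x0 / n * ∑ i, x i ^ 2 ≤ Q A x0 / n * (n * ‖x‖ ^ 2) := by gcongr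
    _ = Q A x0 * ‖x‖^2 := by field_simp
    _ ≤ _ := h4

lemma summable_gauss {n : ℕ} (A : Matrix (Fin n) (Fin n) ℝ) (hA : A.PosDef) (z : Fin n → ℝ) :
    Summable (fun w : Fin n → ℤ => Real.exp (-Real.pi * Q A (fun i => w i + z i))) := by
  obtain ⟨c, hc, h⟩ := posDef_bound A hA
  refine (summable_diag (Real.pi * c) (by positivity) n z).of_nonneg_of_le
    (fun _ => (Real.exp_pos _).le) (fun w => ?_)
  apply Real.exp_le_exp.2
  have := h (fun i => w i + z i)
  nlinarith [Real.pi_pos]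

noncomputable def schur {n : ℕ} (A : Matrix (Fin (n+1)) (Fin (n+1)) ℝ) : Matrix (Fin n) (Fin n) ℝ :=
  fun i j => A i.succ j.succ - A i.succ 0 * A 0 j.succ / A 0 0

lemma det_schur {n : ℕ} (A : Matrix (Fin (n+1)) (Fin (n+1)) ℝ) (ha : A 0 0 ≠ 0) :
    A.det = A 0 0 * (schur A).det := by
  let B : Matrix (Fin (n+1)) (Fin (n+1)) ℝ := fun i j =>
    A i j - (Fin.cons 0 (fun i : Fin n => A i.succ 0 / A 0 0) : Fin (n+1) → ℝ) i * A 0 j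
  have h : A.det = B.det := by
    apply det_eq_of_forall_row_eq_smul_add_const
      (Fin.cons 0 (fun i : Fin n => A i.succ 0 / A 0 0) : Fin (n+1) → ℝ) 0 (by simp)
    intro i j
    simp [B]
  rw [h, det_succ_column_zero, Fin.sum_univ_succ, Finset.sum_eq_zero]
  · have : B.submatrix (Fin.succAbove 0) Fin.succ = schur A := by
      ext i j
      change B (Fin.succAbove 0 i) j.succ = _
      simp [B, schur]
      ring
    rw [this]
    simp [B]
  · intro i _
    have : B i.succ 0 = 0 := by simp [B, ha]
    rw [this]; simp

lemma Q_cons {n : ℕ} (A : Matrix (Fin (n+1)) (Fin (n+1)) ℝ) (hA : A.PosDef) (k : ℝ) (x : Fin n → ℝ) :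
    Q A (Fin.cons k x) = A 0 0 * (k + (∑ i, A 0 i.succ * x i) / A 0 0) ^ 2 + Q (schur A) x := by
  have ha : 0 < A 0 0 := hA.diag_pos
  have hs : ∀ i : Fin n, A i.succ 0 = A 0 i.succ := fun i => by
    simpa using hA.isHermitian.apply 0 i.succ
  have e1 : Q (schur A) x = (∑ i, x i * ∑ j, A i.succ j.succ * x j)
      - (∑ i, A 0 i.succ * x i)^2 / A 0 0 := by
    simp only [Q, schur, dotProduct, mulVec, hs, sub_mul, Finset.sum_sub_distrib, mul_sub]
    congr 1
    rw [sq, Finset.sum_mul, Finset.sum_div]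
    refine Finset.sum_congr rfl fun i _ => ?_
    rw [Finset.mul_sum, Finset.mul_sum, Finset.sum_div]
    refine Finset.sum_congr rfl fun j _ => ?_
    ring
  rw [e1]
  simp only [Q, dotProduct, mulVec, Fin.sum_univ_succ, Fin.cons_zero, Fin.cons_succ, hs, mul_add,
    Finset.sum_add_distrib]
  have e2 : ∑ i, x i * (A 0 i.succ * k) = k * ∑ i, A 0 i.succ * x i := by
    rw [Finset.mul_sum]
    exact Finset.sum_congr rfl fun j _ => by ring
  rw [e2]
  field_simp
  ring

lemma schur_posDef {n : ℕ} (A : Matrix (Fin (n+1)) (Fin (n+1)) ℝ) (hA : A.PosDef) :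
    (schur A).PosDef := by
  have hs : ∀ i j, A i j = A j i := fun i j => by
    simpa using hA.isHermitian.apply j i
  have ha : 0 < A 0 0 := hA.diag_pos
  apply PosDef.of_dotProduct_mulVec_pos
  · ext i j
    simp [schur, hs i.succ 0, hs j.succ 0, hs i.succ j.succ]
    ring
  · intro x hx
    have h := Q_cons A hA (-((∑ i, A 0 i.succ * x i) / A 0 0)) x
    have : 0 < Q A (Fin.cons (-((∑ i, A 0 i.succ * x i) / A 0 0)) x) := by
      have := hA.dotProduct_mulVec_pos
        (x := (Fin.cons (-((∑ i, A 0 i.succ * x i) / A 0 0)) x : Fin (n+1) → ℝ)) (by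
          intro h0
          apply hx
          ext i
          simpa using congrFun h0 i.succ)
      simpa [Q] using this
    rw [h] at this
    simpa [Q] using this

lemma Q_inv_eq {n : ℕ} (A : Matrix (Fin n) (Fin n) ℝ) (hA : A.PosDef) (x : Fin n → ℝ) :
    Q A⁻¹ (A *ᵥ x) = (A *ᵥ x) ⬝ᵥ x := by
  have : IsUnit A.det := (isUnit_iff_isUnit_det _).1 hA.isUnit
  simp [Q, nonsing_inv_mul _ this]

lemma Q_inv_cons {n : ℕ} (A : Matrix (Fin (n+1)) (Fin (n+1)) ℝ) (hA : A.PosDef) (k : ℝ)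
    (y : Fin n → ℝ) :
    Q A⁻¹ (Fin.cons k y) = k ^ 2 / A 0 0 + Q (schur A)⁻¹ (fun i => y i - k / A 0 0 * A 0 i.succ) := by
  have ha : 0 < A 0 0 := hA.diag_pos
  have hs : ∀ i : Fin n, A i.succ 0 = A 0 i.succ := fun i => by
    simpa using hA.isHermitian.apply 0 i.succ
  have hS := schur_posDef A hA
  have hu : IsUnit (schur A).det := (isUnit_iff_isUnit_det _).1 hS.isUnit
  obtain ⟨x, hx⟩ : ∃ x, schur A *ᵥ x = (fun i => y i - k / A 0 0 * A 0 i.succ) :=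
    ⟨(schur A)⁻¹ *ᵥ (fun i => y i - k / A 0 0 * A 0 i.succ), by
      simp [mul_nonsing_inv _ hu]⟩
  have hx' : ∀ i, y i = ∑ j, A i.succ j.succ * x j + (k - ∑ j, A 0 j.succ * x j) / A 0 0 * A 0 i.succ := by
    intro i
    have := congrFun hx i
    simp only [schur, mulVec, dotProduct, sub_mul, Finset.sum_sub_distrib, hs] at this
    have e : ∑ j, A 0 i.succ * A 0 j.succ / A 0 0 * x j
        = A 0 i.succ * (∑ j, A 0 j.succ * x j) / A 0 0 := by
      rw [Finset.mul_sum, Finset.sum_div]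
      exact Finset.sum_congr rfl fun j _ => by ring
    rw [e] at this
    field_simp at this ⊢
    linarith
  have hAx : A *ᵥ (Fin.cons ((k - ∑ j, A 0 j.succ * x j) / A 0 0) x) = Fin.cons k y := by
    ext i
    refine Fin.cases ?_ (fun i => ?_) i
    · simp only [mulVec, dotProduct, Fin.sum_univ_succ, Fin.cons_zero, Fin.cons_succ]
      field_simp
      ring
    · simp only [mulVec, dotProduct, Fin.sum_univ_succ, Fin.cons_zero, Fin.cons_succ, hs]
      rw [hx' i]; ring
  rw [← hx, Q_inv_eq _ hS, ← hAx, Q_inv_eq _ hA, hAx, hx]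
  simp only [dotProduct, Fin.sum_univ_succ, Fin.cons_zero, Fin.cons_succ, sub_mul,
    Finset.sum_sub_distrib]
  have e2 : ∑ i, k / A 0 0 * A 0 i.succ * x i = k / A 0 0 * ∑ i, A 0 i.succ * x i := by
    rw [Finset.mul_sum]
    exact Finset.sum_congr rfl fun j _ => by ring
  rw [e2]
  field_simp
  ring



lemma poisson_one (a : ℝ) (ha : 0 < a) (β t : ℝ) :
    ∑' k : ℤ, Complex.exp (-Real.pi * (a * (k + β) ^ 2 : ℂ) + 2 * Real.pi * Complex.I * (t * k)) =
    ((1 / Real.sqrt a : ℝ) : ℂ) * ∑' j : ℤ, Complex.exp (-Real.pi * ((j + t) ^ 2 / a : ℂ)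
      - 2 * Real.pi * Complex.I * (β * (j + t))) := by
  have hac : (a : ℂ) ≠ 0 := by exact_mod_cast ha.ne'
  have h := Complex.tsum_exp_neg_quadratic (a := (a : ℂ)) (by simpa using ha)
    (-(a * β : ℂ) + Complex.I * t)
  have h1 : ∀ k : ℤ, Complex.exp (-Real.pi * (a * (k + β) ^ 2 : ℂ) + 2 * Real.pi * Complex.I * (t * k))
      = Complex.exp (-Real.pi * a * β ^ 2) *
        Complex.exp (-Real.pi * a * k ^ 2 + 2 * Real.pi * (-(a * β : ℂ) + Complex.I * t) * k) := by
    intro k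
    rw [← Complex.exp_add]
    congr 1
    ring
  simp_rw [h1]
  rw [tsum_mul_left, h]
  have h2 : (1 / (a : ℂ) ^ (1 / 2 : ℂ)) = ((1 / Real.sqrt a : ℝ) : ℂ) := by
    rw [Real.sqrt_eq_rpow, Complex.ofReal_div, Complex.ofReal_cpow ha.le]
    simp
  rw [h2, mul_left_comm, ← tsum_mul_left]
  congr 1
  rw [← (Equiv.neg ℤ).tsum_eq]
  refine tsum_congr fun j => ?_
  rw [← Complex.exp_add]
  congr 1
  simp only [Equiv.neg_apply, Int.cast_neg]
  field_simp
  ring_nf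
  simp only [Complex.I_sq, Complex.I_pow_four, show Complex.I ^ 3 = - Complex.I from Complex.I_pow_three]
  ring

lemma norm_gauss (r t : ℝ) :
    ‖Complex.exp (-Real.pi * (r : ℂ) + 2 * Real.pi * Complex.I * (t : ℂ))‖
      = Real.exp (-Real.pi * r) := by
  rw [Complex.norm_exp]
  congr 1
  simp

theorem poisson : ∀ (n : ℕ) (A : Matrix (Fin n) (Fin n) ℝ), A.PosDef → ∀ z : Fin n → ℝ,
    ∑' w : Fin n → ℤ, Complex.exp (-Real.pi * (Q A (fun i => (w i : ℝ)) : ℂ)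
        + 2 * Real.pi * Complex.I * ((∑ i, z i * w i : ℝ) : ℂ)) =
    ((1 / Real.sqrt A.det : ℝ) : ℂ) *
      ∑' v : Fin n → ℤ, Complex.exp (-Real.pi * (Q A⁻¹ (fun i => v i + z i) : ℂ)) := by
  intro n
  induction n with
  | zero => intro A hA z; simp [Q]
  | succ n ih =>
    intro A hA z
    have ha : 0 < A 0 0 := hA.diag_pos
    have hS := schur_posDef A hA
    have hac : (A 0 0 : ℂ) ≠ 0 := by exact_mod_cast ha.ne'
    -- left side
    have hsumL : Summable (fun w : Fin (n+1) → ℤ => Complex.exp (-Real.pi * (Q A (fun i => (w i : ℝ)) : ℂ)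
        + 2 * Real.pi * Complex.I * ((∑ i, z i * w i : ℝ) : ℂ))) := by
      apply Summable.of_norm
      simp_rw [norm_gauss]
      simpa using summable_gauss A hA 0
    have hsumR : Summable (fun v : Fin (n+1) → ℤ =>
        Complex.exp (-Real.pi * (Q A⁻¹ (fun i => v i + z i) : ℂ))) := by
      have := summable_gauss A⁻¹ hA.inv z
      exact_mod_cast (Complex.summable_ofReal.2 this)
    rw [← (Fin.consEquiv (fun _ => ℤ)).tsum_eq, ← (Fin.consEquiv (fun _ => ℤ)).tsum_eq]
    rw [← (Fin.consEquiv (fun _ => ℤ)).summable_iff] at hsumL hsumR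
    have eR := hsumR.tsum_prod
    rw [← (Equiv.prodComm _ _).summable_iff] at hsumL
    have eL := hsumL.tsum_prod
    simp only [Function.comp_apply] at eR eL
    rw [eR, ← (Equiv.prodComm _ _).tsum_eq, eL]
    have hcast : ∀ (k : ℤ) (w : Fin n → ℤ), (fun i => (((Fin.cons k w : Fin (n+1) → ℤ) i : ℤ) : ℝ))
        = Fin.cons (k : ℝ) (fun i => (w i : ℝ)) := by
      intro k w
      ext i
      refine Fin.cases ?_ (fun i => ?_) i <;> simp
    have hcast2 : ∀ (k : ℤ) (w : Fin n → ℤ), (fun i => (((Fin.cons k w : Fin (n+1) → ℤ) i : ℤ) : ℝ) + z i)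
        = Fin.cons (k + z 0 : ℝ) (fun i => (w i + z i.succ : ℝ)) := by
      intro k w
      ext i
      refine Fin.cases ?_ (fun i => ?_) i <;> simp
    let H : (Fin n → ℤ) → ℤ → ℂ := fun w j =>
      Complex.exp (-Real.pi * ((Q (schur A) (fun i => (w i : ℝ)) + (j + z 0) ^ 2 / A 0 0 : ℝ) : ℂ)
        + 2 * Real.pi * Complex.I *
          ((∑ i, (z i.succ - (j + z 0) / A 0 0 * A 0 i.succ) * w i : ℝ) : ℂ))
    have hH : Summable (Function.uncurry H) := by
      apply Summable.of_norm
      have h1 := (summable_gauss (schur A) hS 0).mul_of_nonneg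
        (summable_one (Real.pi / A 0 0) (by positivity) (z 0))
        (fun _ => (Real.exp_pos _).le) (fun _ => (Real.exp_pos _).le)
      refine h1.congr fun p => ?_
      simp only [Function.uncurry, H]
      rw [norm_gauss, ← Real.exp_add]
      congr 1
      simp
      ring
    have hL : ∀ w : Fin n → ℤ, ∑' k : ℤ, Complex.exp (-Real.pi *
          (Q A (fun i => (((Fin.cons k w : Fin (n+1) → ℤ) i : ℤ) : ℝ)) : ℂ)
        + 2 * Real.pi * Complex.I *
          ((∑ i, z i * ((Fin.cons k w : Fin (n+1) → ℤ) i : ℤ) : ℝ) : ℂ))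
        = ((1 / Real.sqrt (A 0 0) : ℝ) : ℂ) * ∑' j, H w j := by
      intro w
      have e := poisson_one (A 0 0) ha ((∑ i, A 0 i.succ * w i) / A 0 0) (z 0)
      have e1 := congrArg (fun x => Complex.exp (-Real.pi * (Q (schur A) (fun i => (w i : ℝ)) : ℂ)
        + 2 * Real.pi * Complex.I * ((∑ i, z i.succ * w i : ℝ) : ℂ)) * x) e
      rw [mul_left_comm, ← tsum_mul_left, ← tsum_mul_left] at e1
      convert e1 using 1
      · refine tsum_congr fun k => ?_
        rw [← Complex.exp_add, hcast, Q_cons A hA]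
        congr 1
        simp only [Fin.sum_univ_succ, Fin.cons_zero, Fin.cons_succ]
        push_cast
        ring
      · congr 1
        refine tsum_congr fun j => ?_
        rw [← Complex.exp_add]
        simp only [H]
        congr 1
        have : (∑ i, (z i.succ - (j + z 0) / A 0 0 * A 0 i.succ) * w i : ℝ)
          = ∑ i, z i.succ * w i - (∑ i, A 0 i.succ * w i) / A 0 0 * (j + z 0) := by
          simp only [sub_mul, Finset.sum_sub_distrib]
          congr 1
          rw [Finset.sum_div, Finset.sum_mul]
          exact Finset.sum_congr rfl fun i _ => by ring
        rw [this]
        push_cast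
        ring
    have hR : ∀ j : ℤ, ∑' w, H w j = ((1 / Real.sqrt (schur A).det : ℝ) : ℂ) *
        ∑' v : Fin n → ℤ, Complex.exp (-Real.pi *
          (Q A⁻¹ (fun i => (((Fin.cons j v : Fin (n+1) → ℤ) i : ℤ) : ℝ) + z i) : ℂ)) := by
      intro j
      have e := ih (schur A) hS (fun i => z i.succ - (j + z 0) / A 0 0 * A 0 i.succ)
      have e1 := congrArg (fun x => Complex.exp (-Real.pi * (((j + z 0) ^ 2 / A 0 0 : ℝ) : ℂ)) * x) e
      rw [mul_left_comm, ← tsum_mul_left, ← tsum_mul_left] at e1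
      convert e1 using 1
      · refine tsum_congr fun w => ?_
        rw [← Complex.exp_add]
        simp only [H]
        congr 1
        push_cast
        ring
      · congr 1
        refine tsum_congr fun v => ?_
        rw [← Complex.exp_add, hcast2, Q_inv_cons A hA]
        congr 1
        have : (fun i => (v i : ℝ) + (z i.succ - (j + z 0) / A 0 0 * A 0 i.succ))
          = (fun i => v i + z i.succ - (j + z 0) / A 0 0 * A 0 i.succ) := by
          ext i; ring
        rw [this]
        push_cast
        ring
    have hdet : (1 / Real.sqrt A.det : ℝ) = (1 / Real.sqrt (A 0 0)) * (1 / Real.sqrt (schur A).det) := by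
      rw [det_schur A ha.ne', Real.sqrt_mul ha.le]
      field_simp
    calc _ = ∑' w : Fin n → ℤ, ((1 / Real.sqrt (A 0 0) : ℝ) : ℂ) * ∑' j, H w j :=
          tsum_congr fun w => hL w
      _ = ((1 / Real.sqrt (A 0 0) : ℝ) : ℂ) * ∑' j, ∑' w, H w j := by
          rw [tsum_mul_left, hH.tsum_comm]
      _ = _ := by
          rw [tsum_congr hR, tsum_mul_left, hdet, Complex.ofReal_mul, mul_assoc]
          rfl


noncomputable def nsq {n : ℕ} (x : Fin n → ℝ) : ℝ := ∑ i, x i ^ 2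

noncomputable def iv {n : ℕ} (w : Fin n → ℤ) : Fin n → ℝ := fun i => (w i : ℝ)

lemma nsq_nonneg {n : ℕ} (x : Fin n → ℝ) : 0 ≤ nsq x := Finset.sum_nonneg fun _ _ => sq_nonneg _

lemma nsq_eq {n : ℕ} (x : Fin n → ℝ) : nsq x = x ⬝ᵥ x := by
  simp [nsq, dotProduct, sq]

lemma Q_gram {n : ℕ} (G : Matrix (Fin n) (Fin n) ℝ) (x : Fin n → ℝ) :
    Q (Gᵀ * G) x = nsq (G *ᵥ x) := by
  rw [nsq_eq, Q, ← mulVec_mulVec, dotProduct_mulVec, vecMul_transpose]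

lemma gram_posDef {n : ℕ} (G : Matrix (Fin n) (Fin n) ℝ) (hG : IsUnit G.det) :
    (Gᵀ * G).PosDef := by
  have := PosDef.conjTranspose_mul_self G (mulVec_injective_of_isUnit ((isUnit_iff_isUnit_det _).2 hG))
  simpa using this

lemma summable_G {n : ℕ} (G : Matrix (Fin n) (Fin n) ℝ) (hG : IsUnit G.det) :
    Summable (fun w : Fin n → ℤ => Real.exp (-Real.pi * nsq (G *ᵥ iv w))) := by
  have := summable_gauss _ (gram_posDef G hG) 0
  simp only [Q_gram, Pi.zero_apply, add_zero] at this
  exact this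

lemma poisson_G {n : ℕ} (G : Matrix (Fin n) (Fin n) ℝ) (hG : IsUnit G.det) :
    ∑' w : Fin n → ℤ, Real.exp (-Real.pi * nsq (G *ᵥ iv w)) =
      1 / |G.det| * ∑' v : Fin n → ℤ, Real.exp (-Real.pi * nsq ((G⁻¹)ᵀ *ᵥ iv v)) := by
  have h := poisson n _ (gram_posDef G hG) 0
  have e : (Gᵀ * G)⁻¹ = ((G⁻¹)ᵀ)ᵀ * (G⁻¹)ᵀ := by
    rw [Matrix.mul_inv_rev, transpose_transpose, transpose_nonsing_inv]
  rw [e] at h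
  simp only [Q_gram, Pi.zero_apply, zero_mul, Finset.sum_const_zero, add_zero, Complex.ofReal_zero,
    mul_zero, det_mul, det_transpose, Real.sqrt_mul_self_eq_abs] at h
  exact_mod_cast h

lemma half_G {n : ℕ} (G : Matrix (Fin n) (Fin n) ℝ) (hG : IsUnit G.det) :
    Summable (fun w : Fin n → ℤ => Real.exp (-(Real.pi / 4) * nsq (G *ᵥ iv w))) ∧
    ∑' w : Fin n → ℤ, Real.exp (-(Real.pi / 4) * nsq (G *ᵥ iv w)) ≤
      2 ^ n * ∑' w : Fin n → ℤ, Real.exp (-Real.pi * nsq (G *ᵥ iv w)) := by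
  have hd : G.det ≠ 0 := hG.ne_zero
  have hG' : IsUnit ((1/2 : ℝ) • G).det := by
    rw [det_smul]
    exact isUnit_iff_ne_zero.2 (by positivity)
  have hI : IsUnit ((G⁻¹)ᵀ).det := by
    rw [det_transpose]
    exact isUnit_nonsing_inv_det _ hG
  have e1 : ∀ w : Fin n → ℤ, -Real.pi * nsq (((1/2 : ℝ) • G) *ᵥ iv w) = -(Real.pi / 4) * nsq (G *ᵥ iv w) := by
    intro w
    rw [nsq_eq, nsq_eq, smul_mulVec]
    simp
    ring
  have e2 : ((1/2 : ℝ) • G)⁻¹ = (2 : ℝ) • G⁻¹ := by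
    apply inv_eq_right_inv
    rw [smul_mul_smul_comm, mul_nonsing_inv _ hG]
    norm_num
  have hs := summable_G _ hG'
  have hp := poisson_G _ hG'
  simp_rw [e1] at hs hp
  refine ⟨hs, ?_⟩
  rw [hp, poisson_G G hG, e2, det_smul]
  have e3 : (1 / |(1/2 : ℝ) ^ Fintype.card (Fin n) * G.det|) = 2 ^ n * (1 / |G.det|) := by
    rw [abs_mul, abs_of_pos (by positivity : (0:ℝ) < (1/2 : ℝ) ^ Fintype.card (Fin n))]
    simp
    ring
  rw [e3, mul_assoc]
  have hle : ∀ v : Fin n → ℤ, Real.exp (-Real.pi * nsq (((2:ℝ) • G⁻¹)ᵀ *ᵥ iv v)) ≤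
      Real.exp (-Real.pi * nsq ((G⁻¹)ᵀ *ᵥ iv v)) := by
    intro v
    apply Real.exp_le_exp.2
    have : nsq (((2:ℝ) • G⁻¹)ᵀ *ᵥ iv v) = 4 * nsq ((G⁻¹)ᵀ *ᵥ iv v) := by
      rw [nsq_eq, nsq_eq, transpose_smul, smul_mulVec]
      simp
      ring
    rw [this]
    nlinarith [nsq_nonneg ((G⁻¹)ᵀ *ᵥ iv v), Real.pi_pos]
  have := Summable.tsum_le_tsum hle
    ((summable_G _ hI).of_nonneg_of_le (fun _ => (Real.exp_pos _).le) hle) (summable_G _ hI)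
  gcongr

lemma nsq_M {n : ℕ} (u x : Fin n → ℝ) (hu : u ⬝ᵥ u = 1) (κ : ℝ) :
    nsq ((1 + κ • vecMulVec u u) *ᵥ x) = nsq x + ((1 + κ) ^ 2 - 1) * (u ⬝ᵥ x) ^ 2 := by
  have : (1 + κ • vecMulVec u u) *ᵥ x = x + (κ * (u ⬝ᵥ x)) • u := by
    rw [add_mulVec, one_mulVec, smul_mulVec, vecMulVec_mulVec]
    ext i
    simp
    ring
  rw [this, nsq_eq, nsq_eq]
  simp only [dotProduct_add, add_dotProduct, smul_dotProduct, dotProduct_smul, hu, smul_eq_mul,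
    dotProduct_comm x u]
  ring

lemma det_M {n : ℕ} (u : Fin n → ℝ) (hu : u ⬝ᵥ u = 1) (κ : ℝ) :
    (1 + κ • vecMulVec u u).det = 1 + κ := by
  have h := det_one_add_replicateCol_mul_replicateRow (ι := Unit) (κ • u) u
  rw [dotProduct_smul, hu] at h
  rw [← vecMulVec_eq, smul_vecMulVec] at h
  simpa using h

lemma dir_G {n : ℕ} (G : Matrix (Fin n) (Fin n) ℝ) (hG : IsUnit G.det) (u : Fin n → ℝ)
    (hu : u ⬝ᵥ u = 1) (α : ℝ) (hα : 0 < α) :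
    Summable (fun w : Fin n → ℤ => Real.exp (-Real.pi * (nsq (G *ᵥ iv w)
        + (α ^ 2 - 1) * (u ⬝ᵥ (G *ᵥ iv w)) ^ 2))) ∧
    Summable (fun w : Fin n → ℤ => Real.exp (-Real.pi * (nsq ((G⁻¹)ᵀ *ᵥ iv w)
        + (α⁻¹ ^ 2 - 1) * (u ⬝ᵥ ((G⁻¹)ᵀ *ᵥ iv w)) ^ 2))) ∧
    ∑' w : Fin n → ℤ, Real.exp (-Real.pi * (nsq (G *ᵥ iv w)
        + (α ^ 2 - 1) * (u ⬝ᵥ (G *ᵥ iv w)) ^ 2)) =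
      1 / (α * |G.det|) * ∑' w : Fin n → ℤ, Real.exp (-Real.pi * (nsq ((G⁻¹)ᵀ *ᵥ iv w)
        + (α⁻¹ ^ 2 - 1) * (u ⬝ᵥ ((G⁻¹)ᵀ *ᵥ iv w)) ^ 2)) := by
  set M : Matrix (Fin n) (Fin n) ℝ := 1 + (α - 1) • vecMulVec u u with hM
  set N : Matrix (Fin n) (Fin n) ℝ := 1 + (α⁻¹ - 1) • vecMulVec u u with hN
  have hMd : M.det = α := by rw [hM, det_M u hu]; ring
  have hNM : M * N = 1 := by
    have : vecMulVec u u * vecMulVec u u = vecMulVec u u := by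
      rw [vecMulVec_mul_vecMulVec, hu]; simp
    rw [hM, hN, add_mul, mul_add, mul_add, smul_mul_smul_comm, this]
    simp only [mul_one, one_mul]
    rw [add_assoc, ← add_smul, ← add_smul]
    have : (α⁻¹ - 1 + (α - 1 + (α - 1) * (α⁻¹ - 1))) = 0 := by field_simp; ring
    simp [this]
  have hMi : M⁻¹ = N := inv_eq_right_inv hNM
  have hNt : Nᵀ = N := by
    rw [hN, transpose_add, transpose_smul, transpose_vecMulVec, transpose_one]
  have hU : IsUnit (M * G).det := by
    rw [det_mul, hMd]
    exact (isUnit_iff_ne_zero.2 hα.ne').mul hG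
  have hUI : IsUnit (((M * G)⁻¹)ᵀ).det := by
    rw [det_transpose]
    exact isUnit_nonsing_inv_det _ hU
  have e : ((M * G)⁻¹)ᵀ = N * (G⁻¹)ᵀ := by
    rw [Matrix.mul_inv_rev, transpose_mul, hMi, hNt]
  have h1 := summable_G _ hU
  have h2 := summable_G _ hUI
  have h3 := poisson_G _ hU
  rw [e] at h2 h3
  simp only [← mulVec_mulVec, hM, hN, nsq_M _ _ hu, add_sub_cancel] at h1 h2 h3
  refine ⟨h1, h2, ?_⟩
  rw [h3, ← hM, det_mul, hMd, abs_mul, abs_of_pos hα]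

lemma mono_aux (n : ℝ) (hn : 1 ≤ n) (κ : ℝ) (hκ : 1 ≤ κ) (r : ℝ) (hr : n ≤ r) :
    r ≤ n * Real.exp (κ * (r - n)) := by
  have h1 := Real.add_one_le_exp (κ * (r - n))
  have : r ≤ n * (κ * (r - n) + 1) := by nlinarith [mul_nonneg (sub_nonneg.2 hn) (sub_nonneg.2 hr), mul_nonneg (mul_nonneg (sub_nonneg.2 hκ) (sub_nonneg.2 hr)) (by linarith : (0:ℝ) ≤ n)]
  calc r ≤ _ := this
    _ ≤ _ := by gcongr

lemma cs {n : ℕ} (u x : Fin n → ℝ) (hu : u ⬝ᵥ u = 1) : (u ⬝ᵥ x) ^ 2 ≤ nsq x := by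
  have := Finset.sum_mul_sq_le_sq_mul_sq Finset.univ u x
  have h : ∑ i, u i ^ 2 = 1 := by rw [← hu]; simp [dotProduct, sq]
  rw [h, one_mul] at this
  exact this

lemma lower_term {n : ℕ} (hn : 2 ≤ n) (u x : Fin n → ℝ) (hu : u ⬝ᵥ u = 1)
    (hx : u ⬝ᵥ x ≠ 0 → (n : ℝ) ≤ nsq x) (τ : ℝ) (hτ : 0 ≤ τ) :
    Real.exp (-Real.pi * nsq x) - (Real.pi * τ * (n * Real.exp (-(3 * Real.pi / 4) * n))) *
        Real.exp (-(Real.pi / 4) * nsq x) ≤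
      Real.exp (-Real.pi * (nsq x + τ * (u ⬝ᵥ x) ^ 2)) := by
  have hpi := Real.pi_gt_three
  have hn' : (2:ℝ) ≤ n := by exact_mod_cast hn
  by_cases h0 : u ⬝ᵥ x = 0
  · rw [h0]
    have : 0 ≤ (Real.pi * τ * (n * Real.exp (-(3 * Real.pi / 4) * n))) *
        Real.exp (-(Real.pi / 4) * nsq x) := by positivity
    simp only [ne_eq, OfNat.ofNat_ne_zero, not_false_eq_true, zero_pow, mul_zero, add_zero]
    linarith
  have hr := hx h0
  have h1 := cs u x hu
  set r := nsq x
  set p := (u ⬝ᵥ x) ^ 2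
  have h2 := mono_aux n (by linarith) (3 * Real.pi / 4) (by linarith) r hr
  have h3 : Real.exp (-Real.pi * (r + τ * p)) = Real.exp (-Real.pi * r) * Real.exp (-(Real.pi * τ * p)) := by
    rw [← Real.exp_add]; congr 1; ring
  have h4 := Real.add_one_le_exp (-(Real.pi * τ * p))
  have h5 : n * Real.exp (-(3 * Real.pi / 4) * n) * Real.exp (-(Real.pi / 4) * r)
      = Real.exp (-Real.pi * r) * (n * Real.exp (3 * Real.pi / 4 * (r - n))) := by
    rw [mul_assoc, ← Real.exp_add, mul_left_comm, ← Real.exp_add]; congr 2; ring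
  rw [h3]
  calc _ = Real.exp (-Real.pi * r) - Real.pi * τ * (n * Real.exp (-(3 * Real.pi / 4) * n) * Real.exp (-(Real.pi / 4) * r)) := by ring
    _ = Real.exp (-Real.pi * r) * (-(Real.pi * τ * (n * Real.exp (3 * Real.pi / 4 * (r - n)))) + 1) := by
        rw [h5]; ring
    _ ≤ Real.exp (-Real.pi * r) * (-(Real.pi * τ * p) + 1) := by
        have : p ≤ n * Real.exp (3 * Real.pi / 4 * (r - n)) := h1.trans h2
        gcongr
    _ ≤ _ := by gcongr

lemma upper_term {n : ℕ} (hn : 2 ≤ n) (u x : Fin n → ℝ) (hu : u ⬝ᵥ u = 1)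
    (hx : u ⬝ᵥ x ≠ 0 → (n : ℝ) ≤ nsq x) (θ : ℝ) (hθ : 0 ≤ θ) (hθ' : θ ≤ 1 / 100) :
    Real.exp (-Real.pi * (nsq x + (-θ) * (u ⬝ᵥ x) ^ 2)) ≤
    Real.exp (-Real.pi * nsq x) + (Real.pi * θ * Real.exp (Real.pi * θ * n) *
        (n * Real.exp (-(3 * Real.pi / 4) * n))) * Real.exp (-(Real.pi / 4) * nsq x) := by
  have hpi := Real.pi_gt_three
  have hn' : (2:ℝ) ≤ n := by exact_mod_cast hn
  by_cases h0 : u ⬝ᵥ x = 0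
  · rw [h0]
    have : 0 ≤ (Real.pi * θ * Real.exp (Real.pi * θ * n) *
        (n * Real.exp (-(3 * Real.pi / 4) * n))) * Real.exp (-(Real.pi / 4) * nsq x) := by positivity
    simp only [ne_eq, OfNat.ofNat_ne_zero, not_false_eq_true, zero_pow, mul_zero, add_zero]
    linarith
  have hr := hx h0
  have h1 := cs u x hu
  set r := nsq x
  set p := (u ⬝ᵥ x) ^ 2
  have h2 := mono_aux n (by linarith) (3 * Real.pi / 4 - Real.pi * θ) (by nlinarith) r hr
  have h3 : Real.exp (-Real.pi * (r + (-θ) * p)) = Real.exp (-Real.pi * r) * Real.exp (Real.pi * θ * p) := by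
    rw [← Real.exp_add]; congr 1; ring
  have h4 : Real.exp (Real.pi * θ * p) ≤ 1 + Real.pi * θ * r * Real.exp (Real.pi * θ * r) := by
    have a1 : Real.exp (Real.pi * θ * p) ≤ Real.exp (Real.pi * θ * r) := by gcongr
    have a2 := Real.add_one_le_exp (-(Real.pi * θ * r))
    have a3 : Real.exp (-(Real.pi * θ * r)) * Real.exp (Real.pi * θ * r) = 1 := by
      rw [← Real.exp_add]; simp
    nlinarith [Real.exp_pos (Real.pi * θ * r)]
  have h5 : Real.exp (-Real.pi * r) * ((n * Real.exp ((3 * Real.pi / 4 - Real.pi * θ) * (r - n))) * Real.exp (Real.pi * θ * r))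
     = Real.exp (Real.pi * θ * n) * (n * Real.exp (-(3 * Real.pi / 4) * n)) * Real.exp (-(Real.pi / 4) * r) := by
    have : Real.exp (-Real.pi * r) * (Real.exp ((3 * Real.pi / 4 - Real.pi * θ) * (r - n)) * Real.exp (Real.pi * θ * r))
      = Real.exp (Real.pi * θ * n) * (Real.exp (-(3 * Real.pi / 4) * n) * Real.exp (-(Real.pi / 4) * r)) := by
      simp only [← Real.exp_add]; congr 1; ring
    linear_combination (n : ℝ) * this
  rw [h3]
  calc _ ≤ Real.exp (-Real.pi * r) * (1 + Real.pi * θ * r * Real.exp (Real.pi * θ * r)) := by gcongr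
    _ ≤ Real.exp (-Real.pi * r) * (1 + Real.pi * θ * (n * Real.exp ((3 * Real.pi / 4 - Real.pi * θ) * (r - n))) * Real.exp (Real.pi * θ * r)) := by
        gcongr
    _ = _ := by linear_combination Real.pi * θ * h5

lemma num_c (n : ℕ) (hn : 2 ≤ n) :
    4.1 * Real.pi * (n * Real.exp (-(3 * Real.pi / 4) * n) * 2 ^ n) < 1 := by
  have hpi := Real.pi_gt_d2
  have hpi2 := Real.pi_lt_d2
  have he : Real.exp (-(3 * Real.pi / 4)) ≤ 1 / 4 := by
    have := Real.add_one_le_exp (3 * Real.pi / 4)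
    have h2 := Real.quadratic_le_exp_of_nonneg (show 0 ≤ 3 * Real.pi / 4 by positivity)
    rw [Real.exp_neg, ← one_div]
    apply one_div_le_one_div_of_le (by norm_num)
    nlinarith
  set q := Real.exp (-(3 * Real.pi / 4)) with hq
  have hq0 : 0 < q := Real.exp_pos _
  have e : ∀ n : ℕ, Real.exp (-(3 * Real.pi / 4) * n) = q ^ n := fun n => by
    rw [mul_comm, Real.exp_nat_mul]
  have hc : n * Real.exp (-(3 * Real.pi / 4) * n) * 2 ^ n ≤ 8 * q ^ 2 := by
    rw [e]
    induction n, hn using Nat.le_induction with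
    | base => push_cast; apply le_of_eq; ring
    | succ n hn ih =>
      have hn' : (2:ℝ) ≤ n := by exact_mod_cast hn
      have hp : 0 < q ^ n * 2 ^ n := by positivity
      calc ((n+1 : ℕ) : ℝ) * q ^ (n+1) * 2 ^ (n+1) = (2 * q * (n+1)) * (q ^ n * 2 ^ n) := by push_cast; ring
        _ ≤ n * (q ^ n * 2 ^ n) := by
          gcongr
          nlinarith
        _ ≤ _ := by linarith
  have hq2 : q ^ 2 * Real.exp (3 * Real.pi / 2) = 1 := by
    rw [hq, ← Real.exp_nat_mul, ← Real.exp_add]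
    simp
    ring
  have hbig : 104 < Real.exp (3 * Real.pi / 2) := by
    have h1 : Real.exp (4 * 1 + 0.71) ≤ Real.exp (3 * Real.pi / 2) := by
      apply Real.exp_le_exp.2; linarith
    have h2 : Real.exp (4 * 1 + 0.71) = Real.exp 1 ^ 4 * Real.exp 0.71 := by
      rw [Real.exp_add, ← Real.exp_nat_mul]; norm_num
    have h3 := Real.quadratic_le_exp_of_nonneg (show (0:ℝ) ≤ 0.71 by norm_num)
    have h4 : (2.718:ℝ) ^ 4 ≤ Real.exp 1 ^ 4 := by
      have := Real.exp_one_gt_d9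
      gcongr
      linarith
    calc (104 : ℝ) < 2.718 ^ 4 * (1 + 0.71 + 0.71 ^ 2 / 2) := by norm_num
      _ ≤ Real.exp 1 ^ 4 * Real.exp 0.71 := by gcongr
      _ ≤ _ := by rw [← h2]; exact h1
  have hq3 : q ^ 2 < 1 / 104 := by
    rw [lt_div_iff₀ (by norm_num)]
    nlinarith [sq_nonneg q, pow_pos hq0 2]
  nlinarith [Real.pi_pos, pow_pos hq0 2]

lemma exp_small (y : ℝ) (hy : y ≤ 0.0315) : Real.exp y ≤ 1.04 := by
  have a2 := Real.add_one_le_exp (-y)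
  have a3 : Real.exp (-y) * Real.exp y = 1 := by
    rw [← Real.exp_add]; simp
  have : 0 < Real.exp y := Real.exp_pos _
  nlinarith

lemma final_num (η c θ τ X : ℝ) (hη0 : 0 < η) (hc0 : 0 < c) (hθ0 : 0 ≤ θ) (hX0 : 0 < X)
    (hcn : 4.1 * Real.pi * c < 1) (hθ1 : θ ≤ 2 * η) (hτ1 : τ ≤ 2.02 * η) (hX1 : X ≤ 1.04)
    (h1η : 0 < 1 - η)
    (L3 : 1 - Real.pi * τ * c ≤ (1 - η) * (1 + Real.pi * θ * X * c)) : False := by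
  have hpc : 0 < Real.pi * c := by positivity
  have b1 : Real.pi * τ * c ≤ 2.02 * η * (Real.pi * c) := by
    nlinarith
  have b2 : Real.pi * θ * X * c ≤ 2.08 * η * (Real.pi * c) := by
    have : θ * X ≤ 2 * η * 1.04 := by gcongr
    nlinarith
  have b3 : 0 ≤ Real.pi * θ * X * c := by positivity
  have : η ≤ 4.1 * η * (Real.pi * c) := by nlinarith
  nlinarith

theorem core {n : ℕ} (hn : 2 ≤ n) (G : Matrix (Fin n) (Fin n) ℝ) (hG : IsUnit G.det)
    (u : Fin n → ℝ) (hu : u ⬝ᵥ u = 1)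
    (h1 : ∀ w : Fin n → ℤ, u ⬝ᵥ (G *ᵥ iv w) ≠ 0 → (n : ℝ) ≤ nsq (G *ᵥ iv w))
    (h2 : ∀ w : Fin n → ℤ, u ⬝ᵥ ((G⁻¹)ᵀ *ᵥ iv w) ≠ 0 → (n : ℝ) ≤ nsq ((G⁻¹)ᵀ *ᵥ iv w)) : False := by
  have hn' : (2:ℝ) ≤ n := by exact_mod_cast hn
  have hpi := Real.pi_gt_three
  have hpi2 := Real.pi_lt_d2
  have hI : IsUnit ((G⁻¹)ᵀ).det := by
    rw [det_transpose]
    exact isUnit_nonsing_inv_det _ hG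
  have hd : 0 < |G.det| := abs_pos.2 hG.ne_zero
  obtain ⟨η, hη⟩ : ∃ η : ℝ, η = 1 / (200 * n) := ⟨_, rfl⟩
  have hη0 : 0 < η := by rw [hη]; positivity
  have hηn : η * n = 1 / 200 := by rw [hη]; field_simp
  have hη1 : η ≤ 1 / 400 := by nlinarith
  have h1η : 0 < 1 - η := by linarith
  obtain ⟨s1, s2, hp⟩ := dir_G G hG u hu (1 - η)⁻¹ (by positivity)
  rw [inv_inv] at s2 hp
  set θ := 2 * η - η ^ 2 with hθ
  have hθ0 : 0 ≤ θ := by nlinarith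
  have hθ1 : θ ≤ 2 * η := by nlinarith
  have hθe : (1 - η) ^ 2 - 1 = -θ := by rw [hθ]; ring
  obtain ⟨τ, hτ⟩ : ∃ τ : ℝ, τ = (1 - η)⁻¹ ^ 2 - 1 := ⟨_, rfl⟩
  have hτe : τ * (1 - η) ^ 2 = θ := by
    rw [hτ, hθ]; field_simp; ring
  have hτ0 : 0 ≤ τ := by
    by_contra h
    push Not at h
    nlinarith [pow_pos h1η 2]
  have hτ1 : τ ≤ 2.02 * η := by
    have : (0.995 : ℝ) ≤ (1 - η) ^ 2 := by nlinarith
    nlinarith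
  rw [hθe] at s2 hp
  rw [← hτ] at s1 hp
  obtain ⟨t1, t2⟩ := half_G G hG
  obtain ⟨t3, t4⟩ := half_G _ hI
  have g1 := summable_G G hG
  have g2 := summable_G _ hI
  have hP := poisson_G G hG
  set E := (n * Real.exp (-(3 * Real.pi / 4) * n)) with hE
  have hE0 : 0 < E := by positivity
  set T := ∑' w : Fin n → ℤ, Real.exp (-Real.pi * nsq (G *ᵥ iv w)) with hT
  set T' := ∑' w : Fin n → ℤ, Real.exp (-Real.pi * nsq ((G⁻¹)ᵀ *ᵥ iv w)) with hT'
  have hTpos : 0 < T := g1.tsum_pos (fun _ => (Real.exp_pos _).le) 0 (Real.exp_pos _)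
  have L : T - Real.pi * τ * E * (2 ^ n * T) ≤ ∑' w : Fin n → ℤ, Real.exp (-Real.pi * (nsq (G *ᵥ iv w)
      + τ * (u ⬝ᵥ (G *ᵥ iv w)) ^ 2)) := by
    have := Summable.tsum_le_tsum (fun w => lower_term hn u _ hu (h1 w) τ hτ0)
      (g1.sub (t1.mul_left _)) s1
    rw [g1.tsum_sub (t1.mul_left _), tsum_mul_left] at this
    refine le_trans ?_ this
    gcongr
  have U : ∑' w : Fin n → ℤ, Real.exp (-Real.pi * (nsq ((G⁻¹)ᵀ *ᵥ iv w)
        + (-θ) * (u ⬝ᵥ ((G⁻¹)ᵀ *ᵥ iv w)) ^ 2)) ≤ T' + Real.pi * θ * Real.exp (Real.pi * θ * n) * E * (2 ^ n * T') := by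
    have := Summable.tsum_le_tsum (fun w => upper_term hn u _ hu (h2 w) θ hθ0 (by linarith))
      s2 (g2.add (t3.mul_left _))
    rw [g2.tsum_add (t3.mul_left _), tsum_mul_left] at this
    refine le_trans this ?_
    gcongr
  rw [hp] at L
  have hα : 1 / ((1 - η)⁻¹ * |G.det|) = (1 - η) / |G.det| := by field_simp
  rw [hα] at L
  have hTT : T' = |G.det| * T := by rw [hP]; field_simp
  have L2 : T - Real.pi * τ * E * (2 ^ n * T) ≤
      (1 - η) / |G.det| * (T' + Real.pi * θ * Real.exp (Real.pi * θ * n) * E * (2 ^ n * T')) :=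
    L.trans (by gcongr)
  rw [hTT] at L2
  set X := Real.exp (Real.pi * θ * n) with hX
  have hX1 : X ≤ 1.04 := by
    have hy : Real.pi * θ * n ≤ 0.0315 := by
      have : θ * n ≤ 1 / 100 := by nlinarith
      nlinarith
    exact exp_small _ hy
  have hX0 : 0 < X := Real.exp_pos _
  obtain ⟨c, hc⟩ : ∃ c : ℝ, c = E * 2 ^ n := ⟨_, rfl⟩
  have hc0 : 0 < c := by rw [hc]; positivity
  have hcn : 4.1 * Real.pi * c < 1 := by rw [hc]; exact num_c n hn
  have L3 : 1 - Real.pi * τ * c ≤ (1 - η) * (1 + Real.pi * θ * X * c) := by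
    have e1 : T - Real.pi * τ * E * (2 ^ n * T) = (1 - Real.pi * τ * c) * T := by rw [hc]; ring
    have e2 : (1 - η) / |G.det| * (|G.det| * T + Real.pi * θ * X * E * (2 ^ n * (|G.det| * T)))
      = (1 - η) * (1 + Real.pi * θ * X * c) * T := by rw [hc]; field_simp
    rw [e1, e2] at L2
    exact le_of_mul_le_mul_right L2 hTpos
  exact final_num η c θ τ X hη0 hc0 hθ0 hX0 hcn hθ1 hτ1 hX1 h1η L3

lemma euclNorm_eq {n : ℕ} (x : Fin n → ℝ) : euclNorm x = Real.sqrt (nsq x) := rfl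

lemma succMin_nonneg {K : ℕ} (F : Matrix (Fin K) (Fin K) ℝ) (m : ℕ) : 0 ≤ succMin F m :=
  Real.sInf_nonneg fun _ h => h.1.le

lemma succMin_le {K : ℕ} (F : Matrix (Fin K) (Fin K) ℝ) (m : ℕ) (r : ℝ) (hr : 0 < r)
    (s : Finset (Fin K → ℝ)) (h1 : (↑s : Set (Fin K → ℝ)) ⊆ latticeOf F)
    (h2 : ∀ v ∈ s, euclNorm v ≤ r) (h3 : s.card = m)
    (h4 : LinearIndependent ℝ (fun v : s => (v : Fin K → ℝ))) : succMin F m ≤ r :=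
  csInf_le ⟨0, fun _ h => h.1.le⟩ ⟨hr, s, h1, h2, h3, h4⟩

lemma euclNorm_pos {n : ℕ} (x : Fin n → ℝ) (hx : x ≠ 0) : 0 < euclNorm x := by
  rw [euclNorm_eq, Real.sqrt_pos, nsq_eq]
  have := dotProduct_star_self_pos_iff.2 hx
  simpa using this

lemma span_lt {K : ℕ} (F : Matrix (Fin K) (Fin K) ℝ) (m : ℕ) (hm : 1 ≤ m) :
    Module.finrank ℝ (Submodule.span ℝ {x | x ∈ latticeOf F ∧ euclNorm x < succMin F m}) < m := by
  by_contra h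
  push Not at h
  obtain ⟨t, ht, hc, -, hli⟩ := Submodule.exists_finset_span_eq_linearIndepOn ℝ
    {x | x ∈ latticeOf F ∧ euclNorm x < succMin F m}
  rw [← hc] at h
  obtain ⟨s, hst, hs⟩ := Finset.exists_subset_card_eq h
  have hli' : LinearIndepOn ℝ id (s : Set (Fin K → ℝ)) := hli.mono (by exact_mod_cast hst)
  have hne : s.Nonempty := Finset.card_pos.1 (by omega)
  obtain ⟨v, hv, hvs⟩ := Finset.exists_mem_eq_sup' hne euclNorm
  have hv0 : v ≠ 0 := hli'.ne_zero (i := v) (by exact_mod_cast hv)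
  have := succMin_le F m (euclNorm v) (euclNorm_pos v hv0) s
    (fun x hx => (ht (hst hx)).1)
    (fun x hx => by rw [← hvs]; exact Finset.le_sup' _ hx) hs hli'
  have h2 := (ht (hst hv)).2
  linarith

lemma nsq_smul {n : ℕ} (c : ℝ) (x : Fin n → ℝ) : nsq (c • x) = c ^ 2 * nsq x := by
  rw [nsq_eq, nsq_eq]; simp; ring

lemma exists_u {n : ℕ} (V : Submodule ℝ (Fin n → ℝ)) (hV : Module.finrank ℝ V < n) :
    ∃ u : Fin n → ℝ, u ⬝ᵥ u = 1 ∧ ∀ x ∈ V, u ⬝ᵥ x = 0 := by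
  have hlt : V < ⊤ := by
    apply lt_top_iff_ne_top.2
    rintro rfl
    simp at hV
  obtain ⟨f, hf, hV'⟩ := Submodule.exists_le_ker_of_lt_top V hlt
  let u0 : Fin n → ℝ := fun i => f (Pi.single i 1)
  have hfu : ∀ x, f x = u0 ⬝ᵥ x := by
    intro x
    conv_lhs => rw [pi_eq_sum_univ' x]
    rw [map_sum]
    simp only [map_smul, dotProduct, u0, smul_eq_mul]
    refine Finset.sum_congr rfl fun i _ => ?_
    rw [mul_comm]
  have hu0 : u0 ≠ 0 := by
    intro h
    apply hf
    exact LinearMap.ext fun x => by rw [hfu, h]; simp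
  have hp := euclNorm_pos u0 hu0
  have hsq : u0 ⬝ᵥ u0 = euclNorm u0 ^ 2 := by
    rw [euclNorm_eq, Real.sq_sqrt (nsq_nonneg _), nsq_eq]
  refine ⟨(euclNorm u0)⁻¹ • u0, ?_, fun x hx => ?_⟩
  · simp only [smul_dotProduct, dotProduct_smul, hsq, smul_eq_mul]
    field_simp
  · rw [smul_dotProduct, ← hfu, LinearMap.mem_ker.1 (hV' hx)]
    simp

lemma case_one (F : Matrix (Fin 1) (Fin 1) ℝ) (hF : IsUnit F.det) :
    succMin F 1 ≤ |F.det| := by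
  have hd : 0 < |F.det| := abs_pos.2 hF.ne_zero
  have hv : F *ᵥ (iv fun _ => 1) = fun _ => F.det := by
    ext i
    fin_cases i
    simp [mulVec, dotProduct, iv]
  refine succMin_le F 1 _ hd {F *ᵥ (iv fun _ => 1)} ?_ ?_ (by simp) ?_
  · intro x hx
    simp only [Finset.coe_singleton, Set.mem_singleton_iff] at hx
    exact ⟨fun _ => 1, hx⟩
  · intro v h
    rw [Finset.mem_singleton.1 h, hv]
    simp [euclNorm, Real.sqrt_sq_eq_abs]
  · have : LinearIndepOn ℝ id ({F *ᵥ (iv fun _ => 1)} : Set (Fin 1 → ℝ)) := by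
      apply LinearIndepOn.singleton
      intro h
      rw [id, hv] at h
      exact hF.ne_zero (congrFun h 0)
    rw [← Finset.coe_singleton] at this
    exact this

theorem main {K : ℕ} (hK : 2 ≤ K)
    (F : Matrix (Fin K) (Fin K) ℝ) (hF : IsUnit F.det)
    (m : ℕ) (hm1 : 1 ≤ m) (hmK : m ≤ K) :
    succMin F m * succMin (F⁻¹)ᵀ (K - m + 1) ≤ (K : ℝ) := by
  by_contra hcon
  push Not at hcon
  have hK0 : (0:ℝ) < K := by exact_mod_cast (by omega : 0 < K)
  have s1 := span_lt F m hm1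
  have s2 := span_lt (F⁻¹)ᵀ (K - m + 1) (by omega)
  have n1 := succMin_nonneg F m
  have n2 := succMin_nonneg (F⁻¹)ᵀ (K - m + 1)
  set l1 := succMin F m
  set l2 := succMin (F⁻¹)ᵀ (K - m + 1)
  have p1 : 0 < l1 := lt_of_le_of_ne n1 (by intro h; rw [← h] at hcon; linarith)
  have p2 : 0 < l2 := lt_of_le_of_ne n2 (by intro h; rw [← h] at hcon; linarith)
  set V1 := Submodule.span ℝ {x | x ∈ latticeOf F ∧ euclNorm x < l1}
  set V2 := Submodule.span ℝ {x | x ∈ latticeOf (F⁻¹)ᵀ ∧ euclNorm x < l2}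
  obtain ⟨u, hu, huV⟩ := exists_u (V1 ⊔ V2) (by
    have := Submodule.finrank_add_le_finrank_add_finrank V1 V2
    omega)
  set c := Real.sqrt K / l1 with hc
  have hsK : 0 < Real.sqrt K := Real.sqrt_pos.2 hK0
  have hsq : Real.sqrt K ^ 2 = K := Real.sq_sqrt hK0.le
  have hc0 : 0 < c := by positivity
  have hG : IsUnit (c • F).det := by
    rw [det_smul]
    exact (isUnit_iff_ne_zero.2 (by positivity)).mul hF
  have hGi : ((c • F)⁻¹)ᵀ = c⁻¹ • (F⁻¹)ᵀ := by
    rw [← transpose_smul]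
    congr 1
    apply inv_eq_right_inv
    rw [smul_mul_smul_comm, mul_nonsing_inv _ hF, mul_inv_cancel₀ hc0.ne', one_smul]
  have key : ∀ (x : Fin K → ℝ) (l : ℝ), 0 < l → ¬ euclNorm x < l → l ^ 2 ≤ nsq x := by
    intro x l hl h
    push Not at h
    rw [euclNorm_eq, Real.le_sqrt hl.le (nsq_nonneg x)] at h
    exact h
  refine core hK (c • F) hG u hu ?_ ?_
  · intro w hw
    rw [smul_mulVec, dotProduct_smul, smul_eq_mul] at hw
    have : ¬ euclNorm (F *ᵥ iv w) < l1 := by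
      intro h
      apply hw
      rw [huV (F *ᵥ iv w) (Submodule.mem_sup_left (Submodule.subset_span ⟨⟨w, rfl⟩, h⟩)), mul_zero]
    have h2 := key _ _ p1 this
    rw [smul_mulVec, nsq_smul]
    calc (K:ℝ) = c ^ 2 * l1 ^ 2 := by rw [hc, div_pow, hsq]; field_simp
      _ ≤ _ := by gcongr
  · intro w hw
    rw [hGi, smul_mulVec, dotProduct_smul, smul_eq_mul] at hw
    have : ¬ euclNorm ((F⁻¹)ᵀ *ᵥ iv w) < l2 := by
      intro h
      apply hw
      rw [huV ((F⁻¹)ᵀ *ᵥ iv w) (Submodule.mem_sup_right (Submodule.subset_span ⟨⟨w, rfl⟩, h⟩)), mul_zero]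
    have h2 := key _ _ p2 this
    rw [hGi, smul_mulVec, nsq_smul]
    have e : c⁻¹ ^ 2 * l2 ^ 2 = (l1 * l2) ^ 2 / K := by
      rw [hc, inv_div, div_pow, hsq]; field_simp
    calc (K:ℝ) ≤ (l1 * l2) ^ 2 / K := by
          rw [le_div_iff₀ hK0]; nlinarith
      _ = c⁻¹ ^ 2 * l2 ^ 2 := e.symm
      _ ≤ _ := by gcongr

end Bana

/-- **Banaszczyk's transference theorem.** For an invertible `F : ℝ^{K×K}` and `1 ≤ m ≤ K`,
the successive minima of the lattice generated by `F` and of its dual lattice (generated by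
the inverse transpose `F⁻ᵀ`) satisfy `λ_m(F) · λ_{K−m+1}(F⁻ᵀ) ≤ K`. -/
theorem banaszczyk_transference {K : ℕ} (hK : 1 ≤ K)
    (F : Matrix (Fin K) (Fin K) ℝ) (hF : IsUnit F.det)
    (m : ℕ) (hm1 : 1 ≤ m) (hmK : m ≤ K) :
    succMin F m * succMin (F⁻¹)ᵀ (K - m + 1) ≤ (K : ℝ) := by
  rcases Nat.lt_or_ge K 2 with h | h
  · obtain rfl : K = 1 := by omega
    obtain rfl : m = 1 := by omega
    have hI : IsUnit ((F⁻¹)ᵀ).det := by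
      rw [det_transpose]
      exact isUnit_nonsing_inv_det _ hF
    have h1 := Bana.case_one F hF
    have h2 := Bana.case_one _ hI
    have hd : 0 < |F.det| := abs_pos.2 hF.ne_zero
    calc succMin F 1 * succMin (F⁻¹)ᵀ (1 - 1 + 1) ≤ |F.det| * |((F⁻¹)ᵀ).det| :=
          mul_le_mul h1 h2 (Bana.succMin_nonneg _ _) hd.le
      _ = ((1 : ℕ) : ℝ) := by
          rw [det_transpose, ← abs_mul, ← det_mul, mul_nonsing_inv _ hF]
          simp
  · exact Bana.main h F hF m hm1 hmK
end

section
/- Let H ∈ ℝ^{L×K}, P > 0, D ∈ ℝ^{L×L} diagonal with nonnegative diagonal entries, and a ∈ ℝ^K. Let b = P (P H Hᵀ + I + D)^{-1} H a be the MMSE equalizer. Then the effective noise variance satisfies σ_eff²(b, a) = P·‖Hᵀ b − a‖² + bᵀ (I + D) b = aᵀ (P^{-1} I + Hᵀ (I + D)^{-1} H)^{-1} a. -/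
open Matrix

/-- **Woodbury-identity computation of the effective noise variance.** For the MMSE
equalizer `b = P (P H Hᵀ + I + D)⁻¹ H a`, the effective noise variance
`σ_eff²(b,a) = P‖Hᵀ b − a‖² + bᵀ(I+D)b` equals `aᵀ (P⁻¹ I + Hᵀ (I+D)⁻¹ H)⁻¹ a`. -/
theorem mmse_effective_variance {L K : ℕ} (H : Matrix (Fin L) (Fin K) ℝ)
    (P : ℝ) (hP : 0 < P) (dv : Fin L → ℝ) (hdv : ∀ i, 0 ≤ dv i) (a : Fin K → ℝ) :
    let D : Matrix (Fin L) (Fin L) ℝ := Matrix.diagonal dv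
    let b : Fin L → ℝ := P • ((P • (H * Hᵀ) + 1 + D)⁻¹).mulVec (H.mulVec a)
    P * (∑ i, (Hᵀ.mulVec b i - a i) ^ 2) + b ⬝ᵥ ((1 + D).mulVec b) =
      a ⬝ᵥ ((P⁻¹ • (1 : Matrix (Fin K) (Fin K) ℝ) + Hᵀ * (1 + D)⁻¹ * H)⁻¹.mulVec a) := by
  intro D b
  have hS : (1 + D).PosDef := PosDef.one.add_posSemidef (PosSemidef.diagonal hdv)
  have hHH : (P • (H * Hᵀ)).PosSemidef := by
    have h := posSemidef_self_mul_conjTranspose H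
    rw [conjTranspose_eq_transpose_of_trivial] at h
    exact h.smul hP.le
  have hA : (P • (H * Hᵀ) + 1 + D).PosDef := by
    rw [add_assoc]
    exact PosDef.posSemidef_add hHH hS
  have hM : (P⁻¹ • (1 : Matrix (Fin K) (Fin K) ℝ) + Hᵀ * (1 + D)⁻¹ * H).PosDef := by
    have h := hS.inv.posSemidef.conjTranspose_mul_mul_same H
    rw [conjTranspose_eq_transpose_of_trivial] at h
    exact (PosDef.one.smul (inv_pos.mpr hP)).add_posSemidef h
  have hSu := (isUnit_iff_isUnit_det _).mp hS.isUnit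
  have hAu := (isUnit_iff_isUnit_det _).mp hA.isUnit
  have hMu := (isUnit_iff_isUnit_det _).mp hM.isUnit
  have hb : (P • (H * Hᵀ) + 1 + D) *ᵥ b = P • (H *ᵥ a) := by
    simp only [b]
    rw [mulVec_smul, mulVec_mulVec, mul_nonsing_inv _ hAu, one_mulVec]
  obtain ⟨c, hc⟩ : ∃ c, c = a - Hᵀ *ᵥ b := ⟨_, rfl⟩
  have hSb : (1 + D) *ᵥ b = P • (H *ᵥ c) := by
    rw [add_assoc, add_mulVec, smul_mulVec, ← mulVec_mulVec] at hb
    rw [hc, mulVec_sub, smul_sub, ← hb]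
    abel
  have hb2 : b = (1 + D)⁻¹ *ᵥ (P • (H *ᵥ c)) := by
    rw [← hSb, mulVec_mulVec, nonsing_inv_mul _ hSu, one_mulVec]
  have hMc : (P⁻¹ • (1 : Matrix (Fin K) (Fin K) ℝ) + Hᵀ * (1 + D)⁻¹ * H) *ᵥ (P • c) = a := by
    rw [add_mulVec, smul_mulVec, one_mulVec, smul_smul, inv_mul_cancel₀ hP.ne', one_smul,
      ← mulVec_mulVec, ← mulVec_mulVec, mulVec_smul, ← hb2, hc]
    abel
  have hw : (P⁻¹ • (1 : Matrix (Fin K) (Fin K) ℝ) + Hᵀ * (1 + D)⁻¹ * H)⁻¹ *ᵥ a = P • c := by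
    conv_lhs => rw [← hMc]
    rw [mulVec_mulVec, nonsing_inv_mul _ hMu, one_mulVec]
  have hsum : ∑ i, ((Hᵀ *ᵥ b) i - a i) ^ 2 = c ⬝ᵥ c := by
    simp only [hc, dotProduct, Pi.sub_apply]
    exact Finset.sum_congr rfl fun i _ => by ring
  have ha : a = c + Hᵀ *ᵥ b := by rw [hc]; abel
  rw [hw, hsum, hSb, dotProduct_smul, dotProduct_smul, dotProduct_mulVec, ← mulVec_transpose]
  conv_rhs => rw [ha]
  rw [add_dotProduct, smul_eq_mul, smul_eq_mul]
  ring
end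

section
/- Let H ∈ ℝ^{L×K}, P > 0, D ∈ ℝ^{L×L} diagonal with nonnegative diagonal entries, and a ∈ ℝ^K. Then for every equalizer b ∈ ℝ^L, the effective noise variance satisfies σ_eff²(b, a) = P·‖Hᵀ b − a‖² + bᵀ (I + D) b ≥ aᵀ (P^{-1} I + Hᵀ (I + D)^{-1} H)^{-1} a; i.e., the MMSE equalizer b* = P (P H Hᵀ + I + D)^{-1} H a minimizes the effective noise variance over all b ∈ ℝ^L. -/
open Matrix

lemma opt_aux {L K : ℕ} (H : Matrix (Fin L) (Fin K) ℝ)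
    (P : ℝ) (hP : 0 < P) (S : Matrix (Fin L) (Fin L) ℝ) (hS : S.PosDef) (a : Fin K → ℝ)
    (c : Fin L → ℝ) (hc : S *ᵥ c + P • H *ᵥ (Hᵀ *ᵥ c - a) = 0) (b : Fin L → ℝ) :
    P * (∑ i, (Hᵀ.mulVec c i - a i) ^ 2) + c ⬝ᵥ (S.mulVec c) ≤
    P * (∑ i, (Hᵀ.mulVec b i - a i) ^ 2) + b ⬝ᵥ (S.mulVec b) := by
  have hsq : ∀ v : Fin L → ℝ, ∑ i, (Hᵀ.mulVec v i - a i) ^ 2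
      = (Hᵀ *ᵥ v - a) ⬝ᵥ (Hᵀ *ᵥ v - a) := by
    intro v
    simp [dotProduct, sq]
  rw [hsq, hsq]
  obtain ⟨d, rfl⟩ : ∃ d, b = c + d := ⟨b - c, by simp⟩
  have hsym : c ⬝ᵥ (S *ᵥ d) = d ⬝ᵥ (S *ᵥ c) := by
    have hT : Sᵀ = S := by simpa using hS.isHermitian.eq
    rw [dotProduct_mulVec, ← mulVec_transpose, hT, dotProduct_comm]
  have e1 : Hᵀ *ᵥ (c + d) - a = (Hᵀ *ᵥ c - a) + Hᵀ *ᵥ d := by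
    rw [mulVec_add]; abel
  have h1 : 0 ≤ d ⬝ᵥ (S *ᵥ d) := by
    simpa using hS.posSemidef.dotProduct_mulVec_nonneg d
  have h2 : 0 ≤ P * ((Hᵀ *ᵥ d) ⬝ᵥ (Hᵀ *ᵥ d)) :=
    mul_nonneg hP.le (by simpa using dotProduct_star_self_nonneg (Hᵀ *ᵥ d))
  have h3 : d ⬝ᵥ (S *ᵥ c) + P * ((Hᵀ *ᵥ d) ⬝ᵥ (Hᵀ *ᵥ c - a)) = 0 := by
    have := congrArg (fun v => d ⬝ᵥ v) hc
    simp only [dotProduct_add, dotProduct_smul, dotProduct_zero, smul_eq_mul] at this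
    rw [mulVec_transpose H d, ← dotProduct_mulVec]
    exact this
  rw [e1]
  generalize Hᵀ *ᵥ c - a = u at *
  simp only [mulVec_add, dotProduct_add, add_dotProduct]
  rw [dotProduct_comm u (Hᵀ *ᵥ d), hsym]
  nlinarith

/-- **MMSE optimality.** For every equalizer `b ∈ ℝ^L`, the effective noise variance
`σ_eff²(b,a) = P‖Hᵀ b − a‖² + bᵀ(I+D)b` is at least `aᵀ (P⁻¹ I + Hᵀ (I+D)⁻¹ H)⁻¹ a`;
i.e., the MMSE equalizer `b* = P (P H Hᵀ + I + D)⁻¹ H a` minimizes the effective noise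
variance over all `b ∈ ℝ^L`. -/
theorem mmse_optimality {L K : ℕ} (H : Matrix (Fin L) (Fin K) ℝ)
    (P : ℝ) (hP : 0 < P) (dv : Fin L → ℝ) (hdv : ∀ i, 0 ≤ dv i) (a : Fin K → ℝ) :
    let D : Matrix (Fin L) (Fin L) ℝ := Matrix.diagonal dv
    let σeff : (Fin L → ℝ) → ℝ :=
      fun b => P * (∑ i, (Hᵀ.mulVec b i - a i) ^ 2) + b ⬝ᵥ ((1 + D).mulVec b)
    let bstar : Fin L → ℝ := P • ((P • (H * Hᵀ) + 1 + D)⁻¹).mulVec (H.mulVec a)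
    (∀ b : Fin L → ℝ,
        a ⬝ᵥ ((P⁻¹ • (1 : Matrix (Fin K) (Fin K) ℝ) + Hᵀ * (1 + D)⁻¹ * H)⁻¹.mulVec a) ≤
          σeff b) ∧
    (∀ b : Fin L → ℝ, σeff bstar ≤ σeff b) := by
  intro D σeff bstar
  have hS : (1 + D).PosDef := by
    have : 1 + D = diagonal (fun i => 1 + dv i) := by
      rw [← diagonal_one, diagonal_add]
    rw [this]
    exact PosDef.diagonal (fun i => by have := hdv i; linarith)
  have hA : (P • (H * Hᵀ) + 1 + D).PosDef := by
    rw [add_assoc]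
    have h : (H * Hᵀ).PosSemidef := by simpa using posSemidef_self_mul_conjTranspose H
    exact PosDef.posSemidef_add (h.smul hP.le) hS
  have hM : (P⁻¹ • (1 : Matrix (Fin K) (Fin K) ℝ) + Hᵀ * (1 + D)⁻¹ * H).PosDef := by
    have h : (Hᵀ * (1 + D)⁻¹ * H).PosSemidef := by
      simpa using hS.inv.posSemidef.conjTranspose_mul_mul_same H
    exact (PosDef.one.smul (inv_pos.2 hP)).add_posSemidef h
  refine ⟨fun b => ?_, fun b => ?_⟩
  · obtain ⟨x, hx⟩ : ∃ x, x = (P⁻¹ • (1 : Matrix (Fin K) (Fin K) ℝ)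
        + Hᵀ * (1 + D)⁻¹ * H)⁻¹ *ᵥ a := ⟨_, rfl⟩
    obtain ⟨c, hcd⟩ : ∃ c, c = (1 + D)⁻¹ *ᵥ (H *ᵥ x) := ⟨_, rfl⟩
    have hxa : P⁻¹ • x + Hᵀ *ᵥ c = a := by
      have : (P⁻¹ • (1 : Matrix (Fin K) (Fin K) ℝ) + Hᵀ * (1 + D)⁻¹ * H) *ᵥ x = a := by
        rw [hx, mulVec_mulVec, mul_nonsing_inv _ ((isUnit_iff_isUnit_det _).1 hM.isUnit),
          one_mulVec]
      rw [← this, hcd, add_mulVec, smul_mulVec, one_mulVec, ← mulVec_mulVec, ← mulVec_mulVec]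
    have hSc : (1 + D) *ᵥ c = H *ᵥ x := by
      rw [hcd, mulVec_mulVec, mul_nonsing_inv _ ((isUnit_iff_isUnit_det _).1 hS.isUnit),
          one_mulVec]
    have hu : Hᵀ *ᵥ c - a = -(P⁻¹ • x) := by rw [← hxa]; abel
    have key := opt_aux H P hP (1 + D) hS a c (by
      rw [hSc, hu, mulVec_neg, mulVec_smul, smul_neg, smul_smul, mul_inv_cancel₀ hP.ne',
        one_smul, add_neg_cancel]) b
    rw [← hx]
    refine le_trans (le_of_eq ?_) key
    have hsq : ∑ i, (Hᵀ.mulVec c i - a i) ^ 2 = (Hᵀ *ᵥ c - a) ⬝ᵥ (Hᵀ *ᵥ c - a) := by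
      simp [dotProduct, sq]
    rw [hsq, hu, hSc, dotProduct_mulVec, ← mulVec_transpose, ← hxa]
    simp only [add_dotProduct, neg_dotProduct, dotProduct_neg, smul_dotProduct,
      dotProduct_smul, smul_eq_mul]
    field_simp
  · refine opt_aux H P hP (1 + D) hS a bstar ?_ b
    have h : (P • (H * Hᵀ) + 1 + D) *ᵥ bstar = P • H *ᵥ a := by
      change _ *ᵥ (P • _) = _
      rw [mulVec_smul, mulVec_mulVec,
        mul_nonsing_inv _ ((isUnit_iff_isUnit_det _).1 hA.isUnit), one_mulVec]
    rw [add_assoc, add_mulVec, smul_mulVec, ← mulVec_mulVec] at h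
    rw [mulVec_sub, smul_sub, ← h]
    abel
end

section
/- Let H ∈ ℝ^{L×K}, P > 0, d > 0, ΔR > 0, and C ∈ ℝ. Suppose C ≥ R_BT(H, d) and (1/2)·log₂ det(I_L + P H Hᵀ) > L·C − ΔR − L/2. Then d > 2^{−(2ΔR/L + 1)}. -/
open Matrix

theorem aux_det {L : ℕ} (A : Matrix (Fin L) (Fin L) ℝ) (hA : A.PosDef) :
    A.det ≤ (1 + A).det := by
  have h1 := hA.isHermitian.charpoly_eq
  have h2 := Matrix.eval_charpoly A (-1)
  rw [h1, Polynomial.eval_prod] at h2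
  have h3 : (Matrix.scalar (Fin L) (-1 : ℝ) - A) = -(1 + A) := by
    rw [map_neg, map_one]; abel
  rw [h3, Matrix.det_neg] at h2
  have h4 : (1 + A).det = ∏ i, (1 + hA.isHermitian.eigenvalues i) := by
    have h5 : ∏ i, (1 + hA.isHermitian.eigenvalues i)
        = (-1) ^ L * ∏ i, (-1 - hA.isHermitian.eigenvalues i) := by
      rw [show (-1 : ℝ) ^ L = ∏ _i : Fin L, (-1 : ℝ) by simp, ← Finset.prod_mul_distrib]
      exact Finset.prod_congr rfl fun i _ => by ring
    simp at h2
    rw [h5, h2, ← mul_assoc, ← mul_pow]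
    simp
  rw [h4, hA.isHermitian.det_eq_prod_eigenvalues]
  refine Finset.prod_le_prod (fun i _ => ?_) (fun i _ => ?_)
  · exact (hA.eigenvalues_pos i).le
  · simp

/-- **Lower bound on the saturating distortion (Lemma 14, first claim).** If
`C ≥ R_BT(H,d) = (1/(2L)) log₂ det(I + (1/d)(P H Hᵀ + I))` and
`(1/2) log₂ det(I + P H Hᵀ) > L·C − ΔR − L/2`, then `d > 2^{−(2ΔR/L + 1)}`. -/
theorem distortion_lower_bound {L K : ℕ} (hL : 0 < L)
    (H : Matrix (Fin L) (Fin K) ℝ) (P d ΔR C : ℝ)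
    (hP : 0 < P) (hd : 0 < d) (hΔR : 0 < ΔR)
    (hC : (1 / (2 * (L : ℝ))) * Real.logb 2 (1 + d⁻¹ • (P • (H * Hᵀ) + 1)).det ≤ C)
    (hB : (L : ℝ) * C - ΔR - (L : ℝ) / 2 <
      (1 / 2) * Real.logb 2 (1 + P • (H * Hᵀ)).det) :
    (2 : ℝ) ^ (-(2 * ΔR / (L : ℝ) + 1)) < d := by
  have hM : (1 + P • (H * Hᵀ)).PosDef := by
    refine Matrix.PosDef.one.add_posSemidef ?_
    have := Matrix.posSemidef_self_mul_conjTranspose H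
    rw [Matrix.conjTranspose_eq_transpose_of_trivial] at this
    exact this.smul hP.le
  have hL' : (0 : ℝ) < L := by exact_mod_cast hL
  have hdet := aux_det _ (hM.smul (inv_pos.mpr hd))
  rw [add_comm (P • (H * Hᵀ)) 1] at hC
  have hMd := hM.det_pos
  rw [Matrix.det_smul, Fintype.card_fin] at hdet
  have hdL : 0 < d⁻¹ ^ L := by positivity
  have hlog := Real.logb_le_logb_of_le (b := 2) (by norm_num) (mul_pos hdL hMd) hdet
  rw [Real.logb_mul hdL.ne' hMd.ne', Real.logb_pow, Real.logb_inv] at hlog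
  have hC' : Real.logb 2 (1 + d⁻¹ • (1 + P • (H * Hᵀ))).det ≤ C * (2 * L) := by
    rw [one_div, inv_mul_le_iff₀ (by positivity)] at hC
    linarith
  have key : -(2 * ΔR / (L : ℝ) + 1) < Real.logb 2 d := by
    have : 2 * ΔR / (L : ℝ) > - Real.logb 2 d - 1 := by
      rw [gt_iff_lt, lt_div_iff₀ hL']
      nlinarith
    linarith
  exact (Real.lt_logb_iff_rpow_lt (by norm_num) hd).mp key
end

section
/- Let H ∈ ℝ^{L×K} with H ≠ 0, P > 0, d > 0, ΔR > 0, and C ∈ ℝ. Suppose L·C ≤ L·R_BT(H, d) + ΔR and (1/2)·log₂ det(I_L + P H Hᵀ) ≤ L·C − ΔR − L/2. Then d < 1. -/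
open Matrix

lemma aux_det_s11 {n : ℕ} (A : Matrix (Fin n) (Fin n) ℝ) (hA : A.IsHermitian) (a : ℝ) :
    (a • (1 : Matrix (Fin n) (Fin n) ℝ) + A).det = ∏ i, (a + hA.eigenvalues i) := by
  have h1 := Matrix.eval_charpoly A (-a)
  rw [hA.charpoly_eq, Polynomial.eval_prod] at h1
  have h2 : a • (1 : Matrix (Fin n) (Fin n) ℝ) + A = -(Matrix.scalar (Fin n) (-a) - A) := by
    ext i k
    by_cases h : i = k
    · subst h
      simp
      ring
    · simp [h]
  rw [h2, Matrix.det_neg, ← h1, ← Finset.card_univ, ← Finset.prod_const, ← Finset.prod_mul_distrib]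
  refine Finset.prod_congr rfl fun i _ => ?_
  simp
  ring

/-- **Upper bound on the saturating distortion (Lemma 14, second claim).** If `H ≠ 0`,
`L·C ≤ L·R_BT(H,d) + ΔR` where `R_BT(H,d) = (1/(2L)) log₂ det(I + (1/d)(P H Hᵀ + I))`, and
`(1/2) log₂ det(I + P H Hᵀ) ≤ L·C − ΔR − L/2`, then `d < 1`. -/
theorem distortion_upper_bound {L K : ℕ}
    (H : Matrix (Fin L) (Fin K) ℝ) (hH : H ≠ 0) (P d ΔR C : ℝ)
    (hP : 0 < P) (hd : 0 < d) (hΔR : 0 < ΔR)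
    (hA : (L : ℝ) * C ≤
      (L : ℝ) * ((1 / (2 * (L : ℝ))) * Real.logb 2 (1 + d⁻¹ • (P • (H * Hᵀ) + 1)).det) + ΔR)
    (hBc : (1 / 2) * Real.logb 2 (1 + P • (H * Hᵀ)).det ≤
      (L : ℝ) * C - ΔR - (L : ℝ) / 2) :
    d < 1 := by
  by_contra hcon
  have hd1 : 1 ≤ d := not_lt.mp hcon
  have hL : (L : ℝ) ≠ 0 := by
    intro h0
    have : L = 0 := by exact_mod_cast h0
    subst this
    exact hH (Subsingleton.elim _ _)
  have hpsd : (P • (H * Hᵀ)).PosSemidef := by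
    have := (Matrix.posSemidef_self_mul_conjTranspose H).smul hP.le
    simpa using this
  have hne : P • (H * Hᵀ) ≠ 0 := by
    intro h
    have h' : H * Hᴴ = 0 := by
      simpa [hP.ne'] using h
    exact hH (Matrix.self_mul_conjTranspose_eq_zero.mp h')
  generalize P • (H * Hᵀ) = A at *
  set ev := hpsd.isHermitian.eigenvalues with hev
  have hnn : ∀ i, 0 ≤ ev i := hpsd.eigenvalues_nonneg
  obtain ⟨j, hj⟩ : ∃ j, 0 < ev j := by
    by_contra hno
    push Not at hno
    apply hne
    rw [← hpsd.isHermitian.eigenvalues_eq_zero_iff]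
    funext i
    exact le_antisymm (hno i) (hnn i)
  have e1 : (1 + A).det = ∏ i, (1 + ev i) := by
    rw [← aux_det_s11 A hpsd.isHermitian 1, one_smul]
  have e2 : (1 + d⁻¹ • (A + 1)).det = ∏ i, (d⁻¹ * (d + 1 + ev i)) := by
    have : 1 + d⁻¹ • (A + 1) = d⁻¹ • ((d + 1) • (1 : Matrix (Fin L) (Fin L) ℝ) + A) := by
      rw [smul_add, smul_add, smul_smul, mul_add, inv_mul_cancel₀ hd.ne', add_smul]
      simp only [one_smul, mul_one]
      abel
    rw [this, Matrix.det_smul, aux_det_s11 A hpsd.isHermitian, Finset.prod_mul_distrib]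
    simp [hev]
  have p2 : ∀ i, 0 < d⁻¹ * (d + 1 + ev i) := fun i => by
    have := hnn i
    positivity
  have key : ∀ i, d⁻¹ * (d + 1 + ev i) ≤ 2 + ev i := fun i => by
    rw [inv_mul_le_iff₀ hd]
    nlinarith [hnn i]
  have hlt : ∏ i, (d⁻¹ * (d + 1 + ev i)) < ∏ i, (2 * (1 + ev i)) := by
    refine Finset.prod_lt_prod (fun i _ => p2 i) (fun i _ => ?_) ⟨j, Finset.mem_univ _, ?_⟩
    · linarith [key i, hnn i]
    · linarith [key j]
  have hp1 : 0 < ∏ i, (1 + ev i) := Finset.prod_pos fun i _ => by linarith [hnn i]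
  have hlog := Real.logb_lt_logb (b := 2) (by norm_num) (Finset.prod_pos fun i _ => p2 i) hlt
  rw [← e2, Finset.prod_mul_distrib, Finset.prod_const, Finset.card_univ, Fintype.card_fin,
    Real.logb_mul (by positivity) hp1.ne', Real.logb_pow, Real.logb_self_eq_one (by norm_num),
    ← e1] at hlog
  have h3 : (L : ℝ) * ((1 / (2 * (L : ℝ))) * Real.logb 2 (1 + d⁻¹ • (A + 1)).det)
      = 1 / 2 * Real.logb 2 (1 + d⁻¹ • (A + 1)).det := by
    field_simp
  rw [h3] at hA
  linarith
end
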